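/- arXiv:2101.04274 — 5 statements merged into one kernel-verified Lean document; each statement's English description precedes it below -/
import Mathlib

section
/- Let (y, x, τ, s, κ) be a feasible solution of the homogeneous self-dual embedding (Ax − τb = 0, −Aᵀy + τc − s = 0, bᵀy − cᵀx − κ = 0, x ∈ K, τ ≥ 0, s ∈ K*, κ ≥ 0) with κ = 0 < τ. Then x* := x/τ is an optimal solution of (P), i.e., Ax* = b, x* ∈ K, and cᵀx* ≤ cᵀx′ for every x′ ∈ K with Ax′ = b; and (y*, s*) := (y/τ, s/τ) is an optimal solution of (D), i.e., Aᵀy* + s* = c, s* ∈ K*, and bᵀy* ≥ bᵀy′ for every (y′, s′) with Aᵀy′ + s′ = c, s′ ∈ K*. -/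
open Matrix

/-!
Dividing the embedding equations by `τ > 0` makes `x/τ` primal feasible and `(y/τ, s/τ)` dual
feasible, and `κ = 0` turns the last equation into the absence of a duality gap,
`bᵀ(y/τ) = cᵀ(x/τ)`. Any feasible pair satisfies `cᵀx = bᵀy + sᵀx` (`dotProduct_eq_add_slack`),
and `sᵀx ≥ 0` for `x ∈ K`, `s ∈ K*`. This weak duality, applied to each competitor against the
rescaled solution of the other problem, gives both optimality claims.
-/

/-- The duality gap identity: the gap of a pair satisfying the primal and dual equations is
`sᵀx`. -/
theorem dotProduct_eq_add_slack {m n : ℕ} {A : Matrix (Fin m) (Fin n) ℝ} {b : Fin m → ℝ}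
    {c x s : Fin n → ℝ} {y : Fin m → ℝ} (hp : A.mulVec x = b) (hd : Aᵀ.mulVec y + s = c) :
    c ⬝ᵥ x = b ⬝ᵥ y + s ⬝ᵥ x := by
  rw [← hd, ← hp, add_dotProduct, mulVec_transpose, ← dotProduct_mulVec, dotProduct_comm y]

/-- If `(y, x, τ, s, κ)` is feasible for the homogeneous self-dual embedding
with `κ = 0 < τ`, then `x/τ` is optimal for the primal problem (P) and
`(y/τ, s/τ)` is optimal for the dual problem (D). -/
theorem hsde_optimal_solutions {m n : ℕ}
    (A : Matrix (Fin m) (Fin n) ℝ) (b : Fin m → ℝ) (c : Fin n → ℝ)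
    (K : Set (Fin n → ℝ))
    (hKclosed : IsClosed K) (hKconvex : Convex ℝ K)
    (hKcone : ∀ u ∈ K, ∀ t : ℝ, 0 ≤ t → t • u ∈ K)
    (y : Fin m → ℝ) (x : Fin n → ℝ) (τ : ℝ) (s : Fin n → ℝ) (κ : ℝ)
    (h1 : A.mulVec x - τ • b = 0)
    (h2 : -(Aᵀ.mulVec y) + τ • c - s = 0)
    (h3 : b ⬝ᵥ y - c ⬝ᵥ x - κ = 0)
    (hx : x ∈ K) (hτ : 0 ≤ τ)
    (hs : ∀ u ∈ K, 0 ≤ s ⬝ᵥ u) (hκ : 0 ≤ κ)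
    (hκτ : κ = 0 ∧ 0 < τ) :
    (A.mulVec (τ⁻¹ • x) = b ∧ τ⁻¹ • x ∈ K ∧
      ∀ x' ∈ K, A.mulVec x' = b → c ⬝ᵥ (τ⁻¹ • x) ≤ c ⬝ᵥ x') ∧
    (Aᵀ.mulVec (τ⁻¹ • y) + τ⁻¹ • s = c ∧ (∀ u ∈ K, 0 ≤ (τ⁻¹ • s) ⬝ᵥ u) ∧
      ∀ y' s', Aᵀ.mulVec y' + s' = c → (∀ u ∈ K, 0 ≤ s' ⬝ᵥ u) →
        b ⬝ᵥ y' ≤ b ⬝ᵥ (τ⁻¹ • y)) := by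
  obtain ⟨rfl, hpos⟩ := hκτ
  have hne : τ ≠ 0 := hpos.ne'
  have hinv : 0 ≤ τ⁻¹ := inv_nonneg.mpr hτ
  have hp : A.mulVec (τ⁻¹ • x) = b := by
    rw [mulVec_smul, sub_eq_zero.mp h1, inv_smul_smul₀ hne]
  have hd : Aᵀ.mulVec (τ⁻¹ • y) + τ⁻¹ • s = c := by
    have h : Aᵀ.mulVec y + s = τ • c := by
      rw [← sub_eq_zero.mp h2]; abel
    rw [mulVec_smul, ← smul_add, h, inv_smul_smul₀ hne]
  have hxK : τ⁻¹ • x ∈ K := hKcone x hx _ hinv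
  have hsK : ∀ u ∈ K, 0 ≤ (τ⁻¹ • s) ⬝ᵥ u := fun u hu => by
    rw [smul_dotProduct]
    exact mul_nonneg hinv (hs u hu)
  have hgap : b ⬝ᵥ (τ⁻¹ • y) = c ⬝ᵥ (τ⁻¹ • x) := by
    rw [dotProduct_smul, dotProduct_smul, show b ⬝ᵥ y = c ⬝ᵥ x by linarith]
  refine ⟨⟨hp, hxK, fun x' hx' hp' => ?_⟩, hd, hsK, fun y' s' hd' hs' => ?_⟩
  · linarith [dotProduct_eq_add_slack hp' hd, hsK x' hx']
  · linarith [dotProduct_eq_add_slack hp hd', hs' _ hxK]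
end

section
/- Let (y, x, τ, s, κ) be a feasible solution of the homogeneous self-dual embedding (Ax − τb = 0, −Aᵀy + τc − s = 0, bᵀy − cᵀx − κ = 0, x ∈ K, τ ≥ 0, s ∈ K*, κ ≥ 0) with τ = 0 and bᵀy > 0. Then the primal problem (P) is infeasible: there is no x′ ∈ K with Ax′ = b. -/
open Matrix

/-- If `(y, x, τ, s, κ)` is feasible for the homogeneous self-dual embedding
with `τ = 0` and `bᵀy > 0`, then the primal problem (P) is infeasible. -/
theorem hsde_primal_infeasible {m n : ℕ}
    (A : Matrix (Fin m) (Fin n) ℝ) (b : Fin m → ℝ) (c : Fin n → ℝ)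
    (K : Set (Fin n → ℝ))
    (hKclosed : IsClosed K) (hKconvex : Convex ℝ K)
    (hKcone : ∀ u ∈ K, ∀ t : ℝ, 0 ≤ t → t • u ∈ K)
    (y : Fin m → ℝ) (x : Fin n → ℝ) (τ : ℝ) (s : Fin n → ℝ) (κ : ℝ)
    (h1 : A.mulVec x - τ • b = 0)
    (h2 : -(Aᵀ.mulVec y) + τ • c - s = 0)
    (h3 : b ⬝ᵥ y - c ⬝ᵥ x - κ = 0)
    (hx : x ∈ K) (hτ : 0 ≤ τ)
    (hs : ∀ u ∈ K, 0 ≤ s ⬝ᵥ u) (hκ : 0 ≤ κ)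
    (hτ0 : τ = 0) (hby : 0 < b ⬝ᵥ y) :
    ¬ ∃ x' ∈ K, A.mulVec x' = b := by
  rintro ⟨x', hx', hAx'⟩
  have hs_eq : s = -(Aᵀ *ᵥ y) := by
    rw [hτ0, zero_smul, add_zero] at h2
    exact (sub_eq_zero.mp h2).symm
  -- Farkas certificate: `0 ≤ sᵀx' = -(Aᵀy)ᵀx' = -yᵀ(Ax') = -bᵀy < 0`.
  have h := hs x' hx'
  rw [hs_eq, neg_dotProduct, mulVec_transpose, ← dotProduct_mulVec, hAx',
    dotProduct_comm] at h
  linarith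
end

section
/- Let (y, x, τ, s, κ) be a feasible solution of the homogeneous self-dual embedding (Ax − τb = 0, −Aᵀy + τc − s = 0, bᵀy − cᵀx − κ = 0, x ∈ K, τ ≥ 0, s ∈ K*, κ ≥ 0) with τ = 0 and cᵀx < 0. Then the dual problem (D) is infeasible: there is no pair (y′, s′) with Aᵀy′ + s′ = c and s′ ∈ K*. -/
open Matrix

/-- If `(y, x, τ, s, κ)` is feasible for the homogeneous self-dual embedding
with `τ = 0` and `cᵀx < 0`, then the dual problem (D) is infeasible. -/
theorem hsde_dual_infeasible {m n : ℕ}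
    (A : Matrix (Fin m) (Fin n) ℝ) (b : Fin m → ℝ) (c : Fin n → ℝ)
    (K : Set (Fin n → ℝ))
    (hKclosed : IsClosed K) (hKconvex : Convex ℝ K)
    (hKcone : ∀ u ∈ K, ∀ t : ℝ, 0 ≤ t → t • u ∈ K)
    (y : Fin m → ℝ) (x : Fin n → ℝ) (τ : ℝ) (s : Fin n → ℝ) (κ : ℝ)
    (h1 : A.mulVec x - τ • b = 0)
    (h2 : -(Aᵀ.mulVec y) + τ • c - s = 0)
    (h3 : b ⬝ᵥ y - c ⬝ᵥ x - κ = 0)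
    (hx : x ∈ K) (hτ : 0 ≤ τ)
    (hs : ∀ u ∈ K, 0 ≤ s ⬝ᵥ u) (hκ : 0 ≤ κ)
    (hτ0 : τ = 0) (hcx : c ⬝ᵥ x < 0) :
    ¬ ∃ y' s', Aᵀ.mulVec y' + s' = c ∧ ∀ u ∈ K, 0 ≤ s' ⬝ᵥ u := by
  rintro ⟨y', s', hc, hs'⟩
  have hAx : A *ᵥ x = 0 := by simpa [hτ0] using h1
  -- `x` is a certificate: `cᵀx = (Aᵀy' + s')ᵀx = y'ᵀ(Ax) + s'ᵀx = s'ᵀx ≥ 0`.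
  have hcs : c ⬝ᵥ x = s' ⬝ᵥ x := by
    rw [← hc, add_dotProduct, mulVec_transpose, ← dotProduct_mulVec, hAx, dotProduct_zero,
      zero_add]
  exact absurd (hs' x hx) (by rw [← hcs]; exact not_le.mpr hcx)
end

section
/- Convexity of the second-order cone barrier: the function f(x₀, x₁, …, x_n) = −ln(x₀² − ∑_{i=1}^n x_i²) is convex on the open convex set {x ∈ ℝ^{n+1} : x₀ > ‖(x₁, …, x_n)‖}. -/
/-!
Write `q x = x₀² - ∑ xᵢ²` for the Lorentz form. On the open forward cone (`x₀ > 0`, `q x > 0`) the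
reversed Cauchy–Schwarz inequality `x₀ y₀ - ∑ xᵢ yᵢ ≥ √(q x) √(q y)` holds. Expanding the quadratic
form, this says that `√q` is superadditive:
`q (a x + b y) ≥ (a √(q x) + b √(q y))²` for `a, b ≥ 0`.
The cone is therefore convex, and taking logarithms and using that `log` is concave,
`log q (a x + b y) ≥ 2 log (a √(q x) + b √(q y)) ≥ a log q x + b log q y`.
-/

open Finset

/-- The open second-order cone is the forward half of the set where the Lorentz form is positive. -/
lemma mem_soc_iff {n : ℕ} (x : Fin (n + 1) → ℝ) :
    Real.sqrt (∑ i : Fin n, (x i.succ) ^ 2) < x 0 ↔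
      0 < x 0 ∧ 0 < (x 0) ^ 2 - ∑ i : Fin n, (x i.succ) ^ 2 := by
  constructor
  · intro h
    have h0 : 0 < x 0 := (Real.sqrt_nonneg _).trans_lt h
    exact ⟨h0, sub_pos.2 ((Real.sqrt_lt' h0).1 h)⟩
  · rintro ⟨h0, h⟩
    exact (Real.sqrt_lt' h0).2 (sub_pos.1 h)

/-- Reversed Cauchy–Schwarz inequality for the Lorentz form on the forward cone. -/
lemma sqrt_mul_sqrt_le_lorentz {n : ℕ} {x y : Fin (n + 1) → ℝ}
    (hx : Real.sqrt (∑ i : Fin n, (x i.succ) ^ 2) < x 0)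
    (hy : Real.sqrt (∑ i : Fin n, (y i.succ) ^ 2) < y 0) :
    Real.sqrt ((x 0) ^ 2 - ∑ i : Fin n, (x i.succ) ^ 2) *
      Real.sqrt ((y 0) ^ 2 - ∑ i : Fin n, (y i.succ) ^ 2) ≤
      x 0 * y 0 - ∑ i : Fin n, x i.succ * y i.succ := by
  have hcs := Real.sum_mul_le_sqrt_mul_sqrt univ
    (fun i : Fin n => x i.succ) (fun i : Fin n => y i.succ)
  have hqx := ((mem_soc_iff x).1 hx).2
  have hu2 := Real.sq_sqrt (sum_nonneg (s := univ) fun (i : Fin n) _ => sq_nonneg (x i.succ))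
  have hv2 := Real.sq_sqrt (sum_nonneg (s := univ) fun (i : Fin n) _ => sq_nonneg (y i.succ))
  have hu := Real.sqrt_nonneg (∑ i : Fin n, (x i.succ) ^ 2)
  have hv := Real.sqrt_nonneg (∑ i : Fin n, (y i.succ) ^ 2)
  rw [← Real.sqrt_mul hqx.le]
  rw [← hu2, ← hv2]
  set u := Real.sqrt (∑ i : Fin n, (x i.succ) ^ 2)
  set v := Real.sqrt (∑ i : Fin n, (y i.succ) ^ 2)
  have huv : u * v ≤ x 0 * y 0 := mul_le_mul hx.le hy.le hv (hu.trans hx.le)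
  refine le_trans (Real.sqrt_le_iff.2 ⟨sub_nonneg.2 huv, ?_⟩) (sub_le_sub_left hcs _)
  -- The difference of the two sides is `(x₀ v - y₀ u)²`.
  nlinarith [sq_nonneg (x 0 * v - y 0 * u)]

/-- Superadditivity of the square root of the Lorentz form on the forward cone. -/
lemma sq_le_lorentz_combo {n : ℕ} {x y : Fin (n + 1) → ℝ}
    (hx : Real.sqrt (∑ i : Fin n, (x i.succ) ^ 2) < x 0)
    (hy : Real.sqrt (∑ i : Fin n, (y i.succ) ^ 2) < y 0)
    {a b : ℝ} (ha : 0 ≤ a) (hb : 0 ≤ b) :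
    (a * Real.sqrt ((x 0) ^ 2 - ∑ i : Fin n, (x i.succ) ^ 2) +
      b * Real.sqrt ((y 0) ^ 2 - ∑ i : Fin n, (y i.succ) ^ 2)) ^ 2 ≤
      ((a • x + b • y) 0) ^ 2 - ∑ i : Fin n, ((a • x + b • y) i.succ) ^ 2 := by
  have hsum : ∑ i : Fin n, ((a • x + b • y) i.succ) ^ 2 =
      a ^ 2 * ∑ i : Fin n, (x i.succ) ^ 2 + 2 * a * b * ∑ i : Fin n, x i.succ * y i.succ +
        b ^ 2 * ∑ i : Fin n, (y i.succ) ^ 2 := by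
    simp only [mul_sum, ← sum_add_distrib, Pi.add_apply, Pi.smul_apply, smul_eq_mul]
    exact sum_congr rfl fun i _ => by ring
  have hB := mul_le_mul_of_nonneg_left (sqrt_mul_sqrt_le_lorentz hx hy) (mul_nonneg ha hb)
  have hsx := Real.sq_sqrt ((mem_soc_iff x).1 hx).2.le
  have hsy := Real.sq_sqrt ((mem_soc_iff y).1 hy).2.le
  rw [hsum]
  simp only [Pi.add_apply, Pi.smul_apply, smul_eq_mul]
  rw [add_sq, mul_pow, mul_pow, hsx, hsy]
  linarith

/-- Convexity of the second-order cone barrier: the function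
`f(x) = −ln(x₀² − ∑ x_i²)` is convex on the interior of the second-order
cone `{x : ‖(x₁,…,x_n)‖ < x₀}`. -/
theorem soc_barrier_convex {n : ℕ} :
    ConvexOn ℝ
      {x : Fin (n + 1) → ℝ | Real.sqrt (∑ i : Fin n, (x i.succ) ^ 2) < x 0}
      (fun x => -Real.log ((x 0) ^ 2 - ∑ i : Fin n, (x i.succ) ^ 2)) := by
  have hpos : ∀ {s t a b : ℝ}, 0 < s → 0 < t → 0 ≤ a → 0 ≤ b → a + b = 1 →
      0 < a * s + b * t := fun hs ht ha hb hab =>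
    (convex_Ioi (0 : ℝ)) hs ht ha hb hab
  refine ⟨fun x hx y hy a b ha hb hab => ?_, fun x hx y hy a b ha hb hab => ?_⟩
  · obtain ⟨hx0, hqx⟩ := (mem_soc_iff x).1 hx
    obtain ⟨hy0, hqy⟩ := (mem_soc_iff y).1 hy
    exact (mem_soc_iff _).2 ⟨hpos hx0 hy0 ha hb hab,
      (pow_pos (hpos (Real.sqrt_pos.2 hqx) (Real.sqrt_pos.2 hqy) ha hb hab) 2).trans_le
        (sq_le_lorentz_combo hx hy ha hb)⟩
  · have hqx := ((mem_soc_iff x).1 hx).2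
    have hqy := ((mem_soc_iff y).1 hy).2
    have hs := Real.sqrt_pos.2 hqx
    have ht := Real.sqrt_pos.2 hqy
    have hlog := Real.log_le_log (pow_pos (hpos hs ht ha hb hab) 2)
      (sq_le_lorentz_combo hx hy ha hb)
    have hconc := strictConcaveOn_log_Ioi.concaveOn.2 hs ht ha hb hab
    rw [Real.log_pow] at hlog
    simp only [smul_eq_mul, Real.log_sqrt hqx.le, Real.log_sqrt hqy.le] at hconc
    push_cast at hlog
    simp only [smul_eq_mul]
    linarith
end

section
/- Convexity of the exponential cone barrier: the function f(x₁, x₂, x₃) = −ln(x₁) − ln(x₂) − ln(x₂·ln(x₁/x₂) − x₃) is convex on the open convex set {(x₁, x₂, x₃) ∈ ℝ³ : x₁ > 0, x₂ > 0, x₂·ln(x₁/x₂) > x₃}. -/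
/-!
The barrier is a sum of negated logarithms of positive concave functions, since `log` is concave and
increasing. The only concave function that is not linear is `y * log (x / y) - z`; its concavity is
that of the perspective of `log` (`log_perspective_concave`).
-/

/-- Concavity of the perspective `(x, y) ↦ y * log (x / y)` of the logarithm. -/
lemma log_perspective_concave {x₁ y₁ x₂ y₂ a b : ℝ} (hx₁ : 0 < x₁) (hy₁ : 0 < y₁)
    (hx₂ : 0 < x₂) (hy₂ : 0 < y₂) (ha : 0 ≤ a) (hb : 0 ≤ b)
    (hX : 0 < a * x₁ + b * x₂) (hY : 0 < a * y₁ + b * y₂) :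
    a * (y₁ * Real.log (x₁ / y₁)) + b * (y₂ * Real.log (x₂ / y₂)) ≤
      (a * y₁ + b * y₂) * Real.log ((a * x₁ + b * x₂) / (a * y₁ + b * y₂)) := by
  set X := a * x₁ + b * x₂ with hXd
  set Y := a * y₁ + b * y₂ with hYd
  -- The tangent line of the perspective at `(X, Y)`, from `log t ≤ t - 1` at `t = (x / y) / (X / Y)`.
  have key : ∀ x y : ℝ, 0 < x → 0 < y →
      y * Real.log (x / y) ≤ y * Real.log (X / Y) + (x * (Y / X) - y) := by
    intro x y hx hy
    have h := Real.log_le_sub_one_of_pos (x := (x / y) / (X / Y)) (by positivity)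
    rw [Real.log_div (by positivity) (by positivity)] at h
    have h' := mul_le_mul_of_nonneg_left h hy.le
    have e : y * (x / y / (X / Y) - 1) = x * (Y / X) - y := by field_simp
    rw [e] at h'
    linarith
  have h₁ := mul_le_mul_of_nonneg_left (key x₁ y₁ hx₁ hy₁) ha
  have h₂ := mul_le_mul_of_nonneg_left (key x₂ y₂ hx₂ hy₂) hb
  have e : X * (Y / X) = Y := by field_simp
  calc _ ≤ _ := add_le_add h₁ h₂
    _ = Y * Real.log (X / Y) + (X * (Y / X) - Y) := by
      rw [hXd, hYd]; ring
    _ = _ := by rw [e]; ring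

/-- Convexity of the exponential cone barrier: the function
`f(x₁,x₂,x₃) = −ln x₁ − ln x₂ − ln(x₂ ln(x₁/x₂) − x₃)` is convex on the
open convex set `{(x₁,x₂,x₃) : x₁ > 0, x₂ > 0, x₂ ln(x₁/x₂) > x₃}`. -/
theorem exp_cone_barrier_convex :
    ConvexOn ℝ
      {p : ℝ × ℝ × ℝ |
        0 < p.1 ∧ 0 < p.2.1 ∧ p.2.2 < p.2.1 * Real.log (p.1 / p.2.1)}
      (fun p =>
        -Real.log p.1 - Real.log p.2.1
          - Real.log (p.2.1 * Real.log (p.1 / p.2.1) - p.2.2)) := by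
  have pos : ∀ {u v a b : ℝ}, 0 < u → 0 < v → 0 ≤ a → 0 ≤ b → a + b = 1 →
      0 < a * u + b * v := fun hu hv ha hb hab =>
    (convex_Ioi (0 : ℝ)) hu hv ha hb hab
  have logc : ∀ {u v a b : ℝ}, 0 < u → 0 < v → 0 ≤ a → 0 ≤ b → a + b = 1 →
      a * Real.log u + b * Real.log v ≤ Real.log (a * u + b * v) := fun hu hv ha hb hab =>
    strictConcaveOn_log_Ioi.concaveOn.2 hu hv ha hb hab
  constructor
  · rintro ⟨x₁, y₁, z₁⟩ ⟨hx₁, hy₁, hz₁⟩ ⟨x₂, y₂, z₂⟩ ⟨hx₂, hy₂, hz₂⟩ a b ha hb hab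
    simp only at hx₁ hy₁ hz₁ hx₂ hy₂ hz₂
    have hX := pos hx₁ hx₂ ha hb hab
    have hY := pos hy₁ hy₂ ha hb hab
    have hP := log_perspective_concave hx₁ hy₁ hx₂ hy₂ ha hb hX hY
    have hG := pos (sub_pos.2 hz₁) (sub_pos.2 hz₂) ha hb hab
    refine ⟨hX, hY, ?_⟩
    simp only [Prod.smul_mk, Prod.mk_add_mk, smul_eq_mul]
    linarith
  · rintro ⟨x₁, y₁, z₁⟩ ⟨hx₁, hy₁, hz₁⟩ ⟨x₂, y₂, z₂⟩ ⟨hx₂, hy₂, hz₂⟩ a b ha hb hab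
    simp only at hx₁ hy₁ hz₁ hx₂ hy₂ hz₂
    have hX := pos hx₁ hx₂ ha hb hab
    have hY := pos hy₁ hy₂ ha hb hab
    have hP := log_perspective_concave hx₁ hy₁ hx₂ hy₂ ha hb hX hY
    have hG := pos (sub_pos.2 hz₁) (sub_pos.2 hz₂) ha hb hab
    have l₁ := logc hx₁ hx₂ ha hb hab
    have l₂ := logc hy₁ hy₂ ha hb hab
    have l₃ := logc (sub_pos.2 hz₁) (sub_pos.2 hz₂) ha hb hab
    have l₄ := Real.log_le_log hG (show _ ≤ (a * y₁ + b * y₂) *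
      Real.log ((a * x₁ + b * x₂) / (a * y₁ + b * y₂)) - (a * z₁ + b * z₂) by linarith)
    simp only [Prod.smul_mk, Prod.mk_add_mk, smul_eq_mul]
    linarith
end
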